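/- Let V be a finite set of positive integers with even maximum, and let R_k be a set of k+1 positive integers consisting of k odd numbers larger than max V and one even number larger than all of them. Then there is a bijection between the D-permutations of V and the generalized surjective staircases on V ∪ R_k that have no even maxima, under which: even cycle maxima of sigma correspond to fixed points of the staircase, even fixed points of sigma correspond to isolated fixed points, and odd fixed points of sigma correspond to odd maxima. -/

import Mathlib

attribute [local instance] Classical.propDecidable

noncomputable section

/-- The second-largest even element of `S` (0 if there is none). -/
def sndEvenMax (S : Finset ℕ) : ℕ :=
  ((S.filter fun a => Even a).erase (S.sup id)).sup id

/-- `S'`: the elements of `S` that are at most the second-largest even element. -/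
def Sprime (S : Finset ℕ) : Finset ℕ := S.filter fun a => a ≤ sndEvenMax S

/-- Generalized surjective staircases on `S`: excedent maps from `S` onto the even
elements of `S`. -/
def Staircases (S : Finset ℕ) : Finset (↥S → ↥S) :=
  Finset.univ.filter fun f =>
    (∀ a : ↥S, (a : ℕ) ≤ (f a : ℕ) ∧ Even ((f a : ℕ))) ∧
    (∀ b : ↥S, Even (b : ℕ) → ∃ a : ↥S, f a = b)

/-- number of odd maxima -/
def moS (S : Finset ℕ) (f : ↥S → ↥S) : ℕ :=
  (Finset.univ.filter fun a : ↥S =>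
    (a : ℕ) ≤ sndEvenMax S ∧ Odd (a : ℕ) ∧ ((f a : ℕ) = S.sup id)).card

/-- number of even maxima -/
def meS (S : Finset ℕ) (f : ↥S → ↥S) : ℕ :=
  (Finset.univ.filter fun a : ↥S =>
    (a : ℕ) ≤ sndEvenMax S ∧ Even (a : ℕ) ∧ ((f a : ℕ) = S.sup id)).card

def IsFixedPtS (S : Finset ℕ) (f : ↥S → ↥S) (a : ↥S) : Prop :=
  (a : ℕ) ≤ sndEvenMax S ∧ Even (a : ℕ) ∧ f a = a

/-- number of isolated fixed points -/
def fiS (S : Finset ℕ) (f : ↥S → ↥S) : ℕ :=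
  (Finset.univ.filter fun a : ↥S =>
    IsFixedPtS S f a ∧ ∀ b : ↥S, f b = a → b = a).card

/-- number of doubled fixed points -/
def fdS (S : Finset ℕ) (f : ↥S → ↥S) : ℕ :=
  (Finset.univ.filter fun a : ↥S =>
    IsFixedPtS S f a ∧ ∃ b : ↥S, b ≠ a ∧ f b = a).card

/-- the least even element of `S` larger than `a` -/
def nextEven (S : Finset ℕ) (a : ℕ) : ℕ := sInf {b : ℕ | b ∈ S ∧ Even b ∧ a < b}

def IsSurfixedPtS (S : Finset ℕ) (f : ↥S → ↥S) (a : ↥S) : Prop :=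
  (a : ℕ) ≤ sndEvenMax S ∧ Odd (a : ℕ) ∧ (f a : ℕ) = nextEven S (a : ℕ)

/-- number of isolated surfixed points -/
def siS (S : Finset ℕ) (f : ↥S → ↥S) : ℕ :=
  (Finset.univ.filter fun a : ↥S =>
    IsSurfixedPtS S f a ∧ ∀ b : ↥S, f b = f a → b = a).card

/-- number of doubled surfixed points -/
def sdS (S : Finset ℕ) (f : ↥S → ↥S) : ℕ :=
  (Finset.univ.filter fun a : ↥S =>
    IsSurfixedPtS S f a ∧ ∃ b : ↥S, b ≠ a ∧ f b = f a).card

/-- The generalized Dumont–Foata polynomial `Λ_S`, evaluated at elements of a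
commutative ring. -/
def Lam (R : Type) [CommRing R] (S : Finset ℕ) (x y z xb yb zb : R) : R :=
  ∑ f ∈ Staircases S,
    x ^ moS S f * y ^ fdS S f * z ^ siS S f * xb ^ meS S f * yb ^ fiS S f * zb ^ sdS S f


/-- D-permutations of `V`. -/
def DPerms (V : Finset ℕ) : Finset (Equiv.Perm ↥V) :=
  Finset.univ.filter fun σ => ∀ a : ↥V,
    (Odd (a : ℕ) → (a : ℕ) ≤ ((σ a : ℕ))) ∧ (Even (a : ℕ) → ((σ a : ℕ)) ≤ (a : ℕ))

section aux
variable {α : Type} [LinearOrder α] [Fintype α]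

theorem gex (σ : Equiv.Perm α) (x : α) : ∃ k : ℕ, x ≤ (σ⁻¹ ^ (k+1)) x := by
  refine ⟨orderOf σ⁻¹ - 1, ?_⟩
  have h : 0 < orderOf σ⁻¹ := orderOf_pos _
  rw [Nat.sub_add_cancel h, pow_orderOf_eq_one]
  simp

def gm (σ : Equiv.Perm α) (x : α) : α := (σ⁻¹ ^ (Nat.find (gex σ x) + 1)) x

theorem gm_ge (σ : Equiv.Perm α) (x : α) : x ≤ gm σ x := Nat.find_spec (gex σ x)

theorem gm_spec (σ : Equiv.Perm α) (x : α) : ∃ k : ℕ, (σ ^ (k+1)) (gm σ x) = x ∧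
    ∀ i < k, (σ ^ (i+1)) (gm σ x) < x := by
  refine ⟨Nat.find (gex σ x), ?_, ?_⟩
  · simp [gm]
  · intro i hi
    set n := Nat.find (gex σ x) with hn
    have h := Nat.find_min (gex σ x) (m := n - 1 - i) (by omega)
    have e : (σ ^ (i+1)) (gm σ x) = (σ⁻¹ ^ ((n - 1 - i) + 1)) x := by
      unfold gm
      rw [← hn]
      have : n + 1 = (i + 1) + ((n - 1 - i) + 1) := by omega
      rw [this, pow_add σ⁻¹ (i+1), ← Equiv.Perm.mul_apply, inv_pow σ (i+1), mul_inv_cancel_left]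
    rw [e]
    exact not_le.mp h

theorem gm_A (σ : Equiv.Perm α) (t : α) (h : σ t ≤ t) : gm σ (σ t) = t := by
  have : Nat.find (gex σ (σ t)) = 0 := by
    rw [Nat.find_eq_zero]; simpa using h
  unfold gm
  rw [this]; simp

theorem gm_B (σ : Equiv.Perm α) (x : α) : σ (gm σ x) ≤ x := by
  obtain ⟨k, h1, h2⟩ := gm_spec σ x
  rcases Nat.eq_zero_or_pos k with rfl | hk
  · simpa using h1.le
  · simpa using (h2 0 hk).le

theorem gm_D (σ τ : Equiv.Perm α) (h : gm σ = gm τ) (x : α) :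
    σ (gm σ x) = τ (gm σ x) := by
  have key : ∀ σ τ : Equiv.Perm α, gm σ = gm τ → σ (gm σ x) ≤ τ (gm σ x) := by
    intro σ τ h
    have h1 : τ (gm τ x) ≤ gm τ x := (gm_B τ x).trans (gm_ge τ x)
    have h2 := gm_A τ _ h1
    have h3 := gm_B σ (τ (gm τ x))
    rw [← h] at h2 h3
    rwa [h2] at h3
  apply le_antisymm (key σ τ h)
  have := key τ σ h.symm
  rwa [h]

theorem gm_step (σ τ : Equiv.Perm α) (h : gm σ = gm τ) (t : α)
    (ih : ∀ u v, u < t → v < t → (σ u = v ↔ τ u = v)) (u v : α) (hm : max u v = t)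
    (huv : σ u = v) : τ u = v := by
  by_cases hvu : v ≤ u
  · have h1 := gm_A σ u (huv ▸ hvu)
    have := gm_D σ τ h (σ u)
    rw [h1] at this
    rw [← this, huv]
  · push Not at hvu
    have hv : v = t := by rw [← hm]; exact (max_eq_right hvu.le).symm
    subst hv
    obtain ⟨k, a1, a2⟩ := gm_spec σ v
    obtain ⟨k', b1, b2⟩ := gm_spec τ v
    rw [← h] at b1 b2
    have hge := gm_ge σ v
    have hD := gm_D σ τ h v
    set y := gm σ v
    have hk : k ≠ 0 := by
      rintro rfl
      have : y = u := σ.injective (by rw [huv]; simpa using a1)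
      exact absurd hge (by rw [this]; exact not_le.mpr hvu)
    have hk' : k' ≠ 0 := by
      rintro rfl
      have : σ y = v := by rw [hD]; simpa using b1
      have : y = u := σ.injective (by rw [huv, this])
      exact absurd hge (by rw [this]; exact not_le.mpr hvu)
    have agree : ∀ i, i < k → i < k' → (σ ^ (i+1)) y = (τ ^ (i+1)) y := by
      intro i
      induction i with
      | zero => intro _ _; simpa using hD
      | succ i IH =>
        intro h1 h2
        have e := IH (by omega) (by omega)
        have l1 := a2 i (by omega)
        have l2 := a2 (i+1) h1
        rw [pow_succ' σ, Equiv.Perm.mul_apply] at l2 ⊢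
        rw [pow_succ' τ, Equiv.Perm.mul_apply, ← e]
        exact ((ih _ _ l1 l2).1 rfl).symm
    have hkk : k = k' := by
      rcases lt_trichotomy k k' with hlt | he | hlt
      · exfalso
        have e := agree (k-1) (by omega) (by omega)
        rw [Nat.sub_add_cancel (by omega)] at e
        have l1 := a2 (k-1) (by omega)
        rw [Nat.sub_add_cancel (by omega)] at l1
        have l2 := b2 k hlt
        rw [pow_succ', Equiv.Perm.mul_apply, ← e] at l2
        rw [pow_succ', Equiv.Perm.mul_apply] at a1
        have := (ih _ _ l1 l2).2 rfl
        rw [← this, a1] at l2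
        exact lt_irrefl _ l2
      · exact he
      · exfalso
        have e := agree (k'-1) (by omega) (by omega)
        rw [Nat.sub_add_cancel (by omega)] at e
        have l1 := b2 (k'-1) (by omega)
        rw [Nat.sub_add_cancel (by omega)] at l1
        have l2 := a2 k' hlt
        rw [pow_succ', Equiv.Perm.mul_apply, e] at l2
        rw [pow_succ', Equiv.Perm.mul_apply] at b1
        have := (ih _ _ l1 l2).1 rfl
        rw [← this, b1] at l2
        exact lt_irrefl _ l2
    subst hkk
    have e := agree (k-1) (by omega) (by omega)
    rw [Nat.sub_add_cancel (by omega)] at e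
    rw [pow_succ', Equiv.Perm.mul_apply] at a1 b1
    have : u = (σ ^ k) y := σ.injective (by rw [a1, huv])
    rw [this, e, b1]

theorem gm_inj (σ τ : Equiv.Perm α) (h : gm σ = gm τ) : σ = τ := by
  have key : ∀ t : α, ∀ u v, max u v = t → (σ u = v ↔ τ u = v) := by
    intro t
    induction t using WellFoundedLT.induction with
    | ind t IH =>
      have ih : ∀ u v, u < t → v < t → (σ u = v ↔ τ u = v) :=
        fun u v hu hv => IH (max u v) (max_lt hu hv) u v rfl
      intro u v hm
      exact ⟨gm_step σ τ h t ih u v hm,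
        gm_step τ σ h.symm t (fun u v hu hv => (ih u v hu hv).symm) u v hm⟩
  ext x
  exact ((key _ x (σ x) rfl).1 rfl).symm

theorem gm_fix (σ : Equiv.Perm α) (x : α) :
    gm σ x = x ↔ ∀ b, σ.SameCycle x b → b ≤ x := by
  obtain ⟨k, h1, h2⟩ := gm_spec σ x
  constructor
  · intro h b hb
    rw [h] at h1 h2
    obtain ⟨n, hn⟩ := hb.exists_nat_pow_eq
    have hper : ∀ q, ((σ ^ (k+1)) ^ q) x = x := by
      intro q
      induction q with
      | zero => simp
      | succ q ih => rw [pow_succ, Equiv.Perm.mul_apply, h1, ih]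
    have hb2 : (σ ^ (n % (k+1))) x = b := by
      conv_lhs => rw [← hper (n / (k+1)), ← Equiv.Perm.mul_apply, ← pow_mul, ← pow_add,
        Nat.mod_add_div]
      exact hn
    have hlt := Nat.mod_lt n (Nat.succ_pos k)
    rcases Nat.eq_zero_or_pos (n % (k+1)) with h0 | h0
    · rw [h0] at hb2; simpa using hb2.ge
    · have := h2 (n % (k+1) - 1) (by simp at hlt; omega)
      rw [Nat.sub_add_cancel h0, hb2] at this
      exact this.le
  · intro h
    apply le_antisymm _ (gm_ge σ x)
    apply h
    exact Equiv.Perm.SameCycle.symm ⟨((k+1 : ℕ) : ℤ), by rw [zpow_natCast]; exact h1⟩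

theorem card_ge : Nat.card (∀ x : α, {y : α // x ≤ y}) = (Fintype.card α).factorial := by
  have e : α ≃o Fin (Fintype.card α) := (Fintype.orderIsoFinOfCardEq α rfl).symm
  rw [Nat.card_pi]
  have h : ∀ x : α, Nat.card {y : α // x ≤ y} = Fintype.card α - (e x : ℕ) := by
    intro x
    have e2 : {y : α // x ≤ y} ≃ {j : Fin (Fintype.card α) // e x ≤ j} :=
      e.toEquiv.subtypeEquiv (by intro a; simp)
    rw [Nat.card_congr e2, Nat.card_eq_fintype_card, Fintype.card_subtype]
    have : (Finset.univ.filter fun j => e x ≤ j) = Finset.Ici (e x) := by ext; simp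
    rw [this, Fin.card_Ici]
  simp_rw [h]
  have h2 := Equiv.prod_comp e.toEquiv (fun i : Fin (Fintype.card α) => Fintype.card α - (i : ℕ))
  refine h2.trans ?_
  rw [Fin.prod_univ_eq_prod_range (fun i => Fintype.card α - i), ← Finset.prod_range_reflect,
    ← Finset.prod_range_add_one_eq_factorial]
  apply Finset.prod_congr rfl
  intro i hi
  simp at hi
  omega

theorem gm_surj (g : α → α) (hg : ∀ x, x ≤ g x) : ∃ σ : Equiv.Perm α, gm σ = g := by
  let F : Equiv.Perm α → (∀ x : α, {y : α // x ≤ y}) := fun σ x => ⟨gm σ x, gm_ge σ x⟩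
  have hF : Function.Injective F := by
    intro σ τ h
    apply gm_inj
    funext x
    have := congrFun h x
    exact congrArg Subtype.val this
  have hb : Function.Bijective F := by
    apply hF.bijective_of_nat_card_le
    rw [card_ge, Nat.card_perm, Nat.card_eq_fintype_card]
  obtain ⟨σ, hσ⟩ := hb.2 fun x => ⟨g x, hg x⟩
  refine ⟨σ, funext fun x => ?_⟩
  exact congrArg Subtype.val (congrFun hσ x)

end aux

/-- the staircase of a permutation -/
def stair (V Rk : Finset ℕ) (M : ℕ) (hM : M ∈ V ∪ Rk) (σ : Equiv.Perm ↥V) :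
    ↥(V ∪ Rk) → ↥(V ∪ Rk) := fun x =>
  if h : (x : ℕ) ∈ V then
    if Odd (x : ℕ) ∧ gm σ ⟨x, h⟩ = ⟨x, h⟩ then ⟨M, hM⟩
    else ⟨(gm σ ⟨x, h⟩).1, Finset.mem_union_left _ (gm σ ⟨x, h⟩).2⟩
  else ⟨M, hM⟩

/-- Let `V` be a finite set of positive integers with even maximum and `R_k` a set of
`k` odd numbers larger than `max V` together with one even number larger than all of
them.  Then there is a bijection between the D-permutations of `V` and the
generalized surjective staircases on `V ∪ R_k` without even maxima, under which
even cycle maxima correspond to fixed points, even fixed points to isolated fixed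
points, and odd fixed points to odd maxima. -/
theorem dPerm_staircase_bijection (k : ℕ) (V Rk : Finset ℕ) (hne : V.Nonempty)
    (hpos : ∀ v ∈ V, 0 < v) (hmax : Even (V.max' hne))
    (hRodd : (Rk.filter fun a => Odd a).card = k)
    (hReven : (Rk.filter fun a => Even a).card = 1)
    (hRbig : ∀ a ∈ Rk, ∀ v ∈ V, v < a)
    (hRord : ∀ a ∈ Rk, ∀ b ∈ Rk, Even a → Odd b → b < a) :
    ∃ e : {σ : Equiv.Perm ↥V // σ ∈ DPerms V} ≃
        {f : ↥(V ∪ Rk) → ↥(V ∪ Rk) // f ∈ Staircases (V ∪ Rk) ∧ meS (V ∪ Rk) f = 0},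
      ∀ (σ : {σ : Equiv.Perm ↥V // σ ∈ DPerms V}) (j : ℕ) (hj : j ∈ V),
        ((Even j ∧ ∀ b : ↥V, (σ : Equiv.Perm ↥V).SameCycle ⟨j, hj⟩ b → (b : ℕ) ≤ j) ↔
          IsFixedPtS (V ∪ Rk) (e σ : ↥(V ∪ Rk) → ↥(V ∪ Rk))
            ⟨j, Finset.mem_union_left _ hj⟩) ∧
        ((Even j ∧ (σ : Equiv.Perm ↥V) ⟨j, hj⟩ = ⟨j, hj⟩) ↔
          (IsFixedPtS (V ∪ Rk) (e σ : ↥(V ∪ Rk) → ↥(V ∪ Rk))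
              ⟨j, Finset.mem_union_left _ hj⟩ ∧
            ∀ b : ↥(V ∪ Rk), (e σ : ↥(V ∪ Rk) → ↥(V ∪ Rk)) b =
                ⟨j, Finset.mem_union_left _ hj⟩ →
              b = ⟨j, Finset.mem_union_left _ hj⟩)) ∧
        ((Odd j ∧ (σ : Equiv.Perm ↥V) ⟨j, hj⟩ = ⟨j, hj⟩) ↔
          (j ≤ sndEvenMax (V ∪ Rk) ∧ Odd j ∧
            (((e σ : ↥(V ∪ Rk) → ↥(V ∪ Rk)) ⟨j, Finset.mem_union_left _ hj⟩ : ℕ) =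
              (V ∪ Rk).sup id))) := by
  obtain ⟨M, hMs⟩ := Finset.card_eq_one.mp hReven
  have hMR : M ∈ Rk ∧ Even M := by
    have : M ∈ Rk.filter fun a => Even a := by rw [hMs]; simp
    simpa using this
  have hMu : ∀ a ∈ Rk, Even a → a = M := by
    intro a ha hae
    have : a ∈ Rk.filter fun a => Even a := by simp [ha, hae]
    rw [hMs] at this
    simpa using this
  have hM : M ∈ V ∪ Rk := Finset.mem_union_right _ hMR.1
  have hMV : M ∉ V := fun h => lt_irrefl _ (hRbig M hMR.1 M h)
  have hle : ∀ a ∈ V ∪ Rk, a ≤ M := by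
    intro a ha
    rcases Finset.mem_union.mp ha with h | h
    · exact (hRbig M hMR.1 a h).le
    · rcases Nat.even_or_odd a with h2 | h2
      · exact (hMu a h h2).le
      · exact (hRord M hMR.1 a h hMR.2 h2).le
  have hsup : (V ∪ Rk).sup id = M := by
    apply le_antisymm
    · exact Finset.sup_le hle
    · exact Finset.le_sup (f := id) hM
  have hsnd1 : ∀ j ∈ V, j ≤ sndEvenMax (V ∪ Rk) := by
    intro j hj
    refine (V.le_max' j hj).trans ?_
    unfold sndEvenMax
    rw [hsup]
    apply Finset.le_sup (f := id)
    have := V.max'_mem hne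
    simp only [Finset.mem_erase, Finset.mem_filter, Finset.mem_union]
    exact ⟨fun h => hMV (h ▸ this), Or.inl this, hmax⟩
  have hsnd2 : sndEvenMax (V ∪ Rk) < M := by
    unfold sndEvenMax
    rw [hsup, Finset.sup_lt_iff]
    · intro b hb
      simp only [Finset.mem_erase, Finset.mem_filter] at hb
      exact lt_of_le_of_ne (hle b hb.2.1) hb.1
    · obtain ⟨v, hv⟩ := hne
      exact lt_of_le_of_lt (Nat.zero_le v) (hRbig M hMR.1 v hv)
  -- f facts
  have s1 : ∀ (σ : Equiv.Perm ↥V) (x : ℕ) (hx : x ∈ V), ¬ (Odd x ∧ gm σ ⟨x, hx⟩ = ⟨x, hx⟩) →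
      stair V Rk M hM σ ⟨x, Finset.mem_union_left _ hx⟩ =
        ⟨(gm σ ⟨x, hx⟩).1, Finset.mem_union_left _ (gm σ ⟨x, hx⟩).2⟩ := by
    intro σ x hx h
    unfold stair
    rw [dif_pos hx, if_neg h]
  have s2 : ∀ (σ : Equiv.Perm ↥V) (x : ℕ) (hx : x ∈ V), (Odd x ∧ gm σ ⟨x, hx⟩ = ⟨x, hx⟩) →
      stair V Rk M hM σ ⟨x, Finset.mem_union_left _ hx⟩ = ⟨M, hM⟩ := by
    intro σ x hx h
    unfold stair
    rw [dif_pos hx, if_pos h]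
  have s3 : ∀ (σ : Equiv.Perm ↥V) (x : ↥(V ∪ Rk)) , (x : ℕ) ∉ V →
      stair V Rk M hM σ x = ⟨M, hM⟩ := by
    intro σ x hx
    unfold stair
    rw [dif_neg hx]
  -- even values hit through σ
  have s4 : ∀ (σ : Equiv.Perm ↥V) (b : ↥V), Even (b : ℕ) → σ b ≤ b →
      stair V Rk M hM σ ⟨σ b, Finset.mem_union_left _ (σ b).2⟩ =
        ⟨b, Finset.mem_union_left _ b.2⟩ := by
    intro σ b hb h
    have hA := gm_A σ b h
    rw [s1 σ (σ b) (σ b).2]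
    · simp [hA]
    · rintro ⟨ho, he⟩
      have he' : gm σ (σ b) = σ b := he
      rw [hA] at he'
      rw [← he'] at ho
      exact (Nat.not_even_iff_odd.mpr ho) hb
  -- if the value is in V it is gm
  have s5 : ∀ (σ : Equiv.Perm ↥V) (b : ↥(V ∪ Rk)) (j : ℕ) (hj : j ∈ V),
      stair V Rk M hM σ b = ⟨j, Finset.mem_union_left _ hj⟩ →
        ∃ hb : (b : ℕ) ∈ V, gm σ ⟨b, hb⟩ = ⟨j, hj⟩ := by
    intro σ b j hj h
    have hjM : j ≠ M := fun h => hMV (h ▸ hj)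
    by_cases hb : (b : ℕ) ∈ V
    · refine ⟨hb, ?_⟩
      by_cases hc : Odd (b : ℕ) ∧ gm σ ⟨b, hb⟩ = ⟨b, hb⟩
      · have h2 := s2 σ b hb hc
        rw [Subtype.coe_eta, h] at h2
        exact absurd (congrArg Subtype.val h2) hjM
      · have h2 := s1 σ b hb hc
        rw [Subtype.coe_eta, h] at h2
        exact Subtype.ext (congrArg Subtype.val h2).symm
    · rw [s3 σ b hb] at h
      exact absurd (congrArg Subtype.val h).symm hjM
  have hmem : ∀ σ : Equiv.Perm ↥V, σ ∈ DPerms V →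
      stair V Rk M hM σ ∈ Staircases (V ∪ Rk) ∧ meS (V ∪ Rk) (stair V Rk M hM σ) = 0 := by
    intro σ hσ
    simp only [DPerms, Finset.mem_filter, Finset.mem_univ, true_and] at hσ
    constructor
    · simp only [Staircases, Finset.mem_filter, Finset.mem_univ, true_and]
      constructor
      · rintro ⟨a, ha⟩
        by_cases haV : a ∈ V
        · by_cases hc : Odd a ∧ gm σ ⟨a, haV⟩ = ⟨a, haV⟩
          · rw [s2 σ a haV hc]
            exact ⟨hle a ha, hMR.2⟩
          · rw [s1 σ a haV hc]
            have hge := gm_ge σ ⟨a, haV⟩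
            refine ⟨hge, ?_⟩
            by_contra hodd
            rw [Nat.not_even_iff_odd] at hodd
            have h1 : gm σ ⟨a, haV⟩ ≤ σ (gm σ ⟨a, haV⟩) := (hσ _).1 hodd
            have h2 := gm_B σ ⟨a, haV⟩
            have h3 := le_antisymm (h1.trans h2) hge
            apply hc
            refine ⟨?_, h3⟩
            rw [h3] at hodd
            exact hodd
        · rw [s3 σ _ haV]
          exact ⟨hle a ha, hMR.2⟩
      · rintro ⟨b, hb⟩ hbe
        by_cases hbV : b ∈ V
        · exact ⟨_, s4 σ ⟨b, hbV⟩ hbe ((hσ _).2 hbe)⟩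
        · have hbR := (Finset.mem_union.mp hb).resolve_left hbV
          have := hMu b hbR hbe
          subst this
          exact ⟨_, s3 σ ⟨b, hb⟩ hbV⟩
    · simp only [meS, Finset.card_eq_zero, Finset.filter_eq_empty_iff, hsup]
      rintro ⟨a, ha⟩ - ⟨h1, h2, h3⟩
      simp only at h1 h2
      have haV : a ∈ V := by
        by_contra haV
        have := hMu a ((Finset.mem_union.mp ha).resolve_left haV) h2
        omega
      rw [s1 σ a haV (fun h => (Nat.not_even_iff_odd.mpr h.1) h2)] at h3
      simp only at h3
      exact hMV (h3 ▸ (gm σ ⟨a, haV⟩).2)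
  let F : {σ : Equiv.Perm ↥V // σ ∈ DPerms V} →
        {f : ↥(V ∪ Rk) → ↥(V ∪ Rk) // f ∈ Staircases (V ∪ Rk) ∧ meS (V ∪ Rk) f = 0} :=
    fun σ => ⟨stair V Rk M hM σ, hmem σ σ.2⟩
  have hinj : Function.Injective F := by
    rintro ⟨σ, hσ⟩ ⟨τ, hτ⟩ h
    have h' : stair V Rk M hM σ = stair V Rk M hM τ := congrArg Subtype.val h
    apply Subtype.ext
    apply gm_inj
    funext x
    obtain ⟨x, hx⟩ := x
    have hx' := congrFun h' ⟨x, Finset.mem_union_left _ hx⟩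
    by_cases hc : Odd x ∧ gm σ ⟨x, hx⟩ = ⟨x, hx⟩
    · by_cases hd : Odd x ∧ gm τ ⟨x, hx⟩ = ⟨x, hx⟩
      · exact hc.2.trans hd.2.symm
      · rw [s2 σ x hx hc, s1 τ x hx hd] at hx'
        have := congrArg Subtype.val hx'
        simp only at this
        exact absurd (this ▸ (gm τ ⟨x, hx⟩).2) hMV
    · rw [s1 σ x hx hc] at hx'
      obtain ⟨_, h5⟩ := s5 τ _ _ (gm σ ⟨x, hx⟩).2 hx'.symm
      exact h5.symm
  have hsurj : Function.Surjective F := by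
    rintro ⟨f, hf, hme⟩
    simp only [Staircases, Finset.mem_filter, Finset.mem_univ, true_and] at hf
    simp only [meS, Finset.card_eq_zero, Finset.filter_eq_empty_iff, hsup] at hme
    obtain ⟨hf1, hf2⟩ := hf
    let g : ↥V → ↥V := fun x =>
      if h : (f ⟨x, Finset.mem_union_left _ x.2⟩ : ℕ) ∈ V then ⟨_, h⟩ else x
    have g1 : ∀ (x : ↥V) (h : (f ⟨x, Finset.mem_union_left _ x.2⟩ : ℕ) ∈ V), g x = ⟨_, h⟩ :=
      fun x h => dif_pos h
    have g2 : ∀ (x : ↥V), (f ⟨x, Finset.mem_union_left _ x.2⟩ : ℕ) ∉ V → g x = x :=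
      fun x h => dif_neg h
    have hfM : ∀ a, (f a : ℕ) ∉ V → f a = ⟨M, hM⟩ := by
      intro a h
      apply Subtype.ext
      exact hMu _ ((Finset.mem_union.mp (f a).2).resolve_left h) (hf1 a).2
    obtain ⟨σ, hσ⟩ := gm_surj g (by
      intro x
      by_cases h : (f ⟨x, Finset.mem_union_left _ x.2⟩ : ℕ) ∈ V
      · rw [g1 x h]; exact (hf1 ⟨x, Finset.mem_union_left _ x.2⟩).1
      · rw [g2 x h])
    have hσD : σ ∈ DPerms V := by
      simp only [DPerms, Finset.mem_filter, Finset.mem_univ, true_and]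
      intro y
      constructor
      · intro hy
        by_contra hlt
        have hlt' : σ y < y := not_le.mp hlt
        have hA := gm_A σ y hlt'.le
        rw [hσ] at hA
        by_cases h : (f ⟨σ y, Finset.mem_union_left _ (σ y).2⟩ : ℕ) ∈ V
        · rw [g1 _ h] at hA
          have h2 := (hf1 ⟨σ y, Finset.mem_union_left _ (σ y).2⟩).2
          have h3 := congrArg Subtype.val hA
          simp only at h3
          rw [h3] at h2
          exact (Nat.not_even_iff_odd.mpr hy) h2
        · rw [g2 _ h] at hA
          exact hlt'.ne hA
      · intro hy
        obtain ⟨a, ha⟩ := hf2 ⟨y, Finset.mem_union_left _ y.2⟩ hy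
        have hay := (hf1 a).1
        rw [ha] at hay
        have haV : (a : ℕ) ∈ V := by
          by_contra haV
          have := hRbig a ((Finset.mem_union.mp a.2).resolve_left haV) y y.2
          simp only at hay
          omega
        have hga : g ⟨a, haV⟩ = y := by
          have hv : (f ⟨(⟨a, haV⟩ : ↥V), Finset.mem_union_left _ haV⟩ : ℕ) ∈ V := by
            change (f a : ℕ) ∈ V
            rw [ha]; exact y.2
          rw [g1 _ hv]
          apply Subtype.ext
          change (f a : ℕ) = y
          rw [ha]
        have h2 := (gm_B σ ⟨a, haV⟩).trans (gm_ge σ ⟨a, haV⟩)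
        rw [hσ, hga] at h2
        exact h2
    refine ⟨⟨σ, hσD⟩, Subtype.ext ?_⟩
    change stair V Rk M hM σ = f
    funext x
    obtain ⟨x, hx⟩ := x
    by_cases hxV : x ∈ V
    · by_cases hc : Odd x ∧ gm σ ⟨x, hxV⟩ = ⟨x, hxV⟩
      · rw [s2 σ x hxV hc]
        symm
        apply hfM
        intro h
        have h1 := hc.2
        rw [hσ, g1 ⟨x, hxV⟩ h] at h1
        have h2 := (hf1 ⟨x, hx⟩).2
        have h3 : (f ⟨x, hx⟩ : ℕ) = x := congrArg Subtype.val h1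
        rw [h3] at h2
        exact (Nat.not_even_iff_odd.mpr hc.1) h2
      · rw [s1 σ x hxV hc]
        apply Subtype.ext
        by_cases h : (f ⟨x, hx⟩ : ℕ) ∈ V
        · have := g1 ⟨x, hxV⟩ h
          rw [← hσ] at this
          have h3 : (gm σ ⟨x, hxV⟩).1 = (f ⟨x, hx⟩ : ℕ) := congrArg Subtype.val this
          exact h3
        · exfalso
          have h1 := g2 ⟨x, hxV⟩ h
          rw [← hσ] at h1
          have hxe : Even x := by
            by_contra ho
            exact hc ⟨Nat.not_even_iff_odd.mp ho, h1⟩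
          exact hme (x := ⟨x, hx⟩) (Finset.mem_univ _)
            ⟨hsnd1 x hxV, hxe, congrArg Subtype.val (hfM _ h)⟩
    · rw [s3 σ ⟨x, hx⟩ hxV]
      symm
      apply hfM
      intro h
      have h1 := (hf1 ⟨x, hx⟩).1
      have := hRbig x ((Finset.mem_union.mp hx).resolve_left hxV) _ h
      simp only at h1
      omega
  refine ⟨Equiv.ofBijective F ⟨hinj, hsurj⟩, ?_⟩
  rintro ⟨σ, hσ⟩ j hj
  have hσ' := hσ
  simp only [DPerms, Finset.mem_filter, Finset.mem_univ, true_and] at hσ'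
  have hF : ((Equiv.ofBijective F ⟨hinj, hsurj⟩ ⟨σ, hσ⟩ : {f : ↥(V ∪ Rk) → ↥(V ∪ Rk) //
    f ∈ Staircases (V ∪ Rk) ∧ meS (V ∪ Rk) f = 0}) : ↥(V ∪ Rk) → ↥(V ∪ Rk)) =
      stair V Rk M hM σ := rfl
  rw [hF]
  have hfix : Even j → (gm σ ⟨j, hj⟩ = ⟨j, hj⟩ ↔
      stair V Rk M hM σ ⟨j, Finset.mem_union_left _ hj⟩ = ⟨j, Finset.mem_union_left _ hj⟩) := by
    intro hje
    rw [s1 σ j hj (fun h => (Nat.not_even_iff_odd.mpr h.1) hje)]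
    constructor
    · intro h; rw [h]
    · intro h
      have h3 : (gm σ ⟨j, hj⟩).1 = j := congrArg Subtype.val h
      exact Subtype.ext h3
  refine ⟨?_, ?_, ?_⟩
  · constructor
    · rintro ⟨hje, hc⟩
      exact ⟨hsnd1 j hj, hje, (hfix hje).1 ((gm_fix σ _).2 hc)⟩
    · rintro ⟨-, hje, hc⟩
      exact ⟨hje, (gm_fix σ _).1 ((hfix hje).2 hc)⟩
  · constructor
    · rintro ⟨hje, hc⟩
      replace hc : σ ⟨j, hj⟩ = ⟨j, hj⟩ := hc
      have hA := gm_A σ ⟨j, hj⟩ hc.le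
      rw [hc] at hA
      refine ⟨⟨hsnd1 j hj, hje, (hfix hje).1 hA⟩, ?_⟩
      intro b hb
      obtain ⟨hbV, h5⟩ := s5 σ b j hj hb
      have h1 := gm_B σ ⟨b, hbV⟩
      have h2 := gm_ge σ ⟨b, hbV⟩
      rw [h5] at h1 h2
      rw [hc] at h1
      exact Subtype.ext (le_antisymm h2 h1)
    · rintro ⟨⟨-, hje, hc⟩, hiso⟩
      refine ⟨hje, ?_⟩
      have := hiso _ (s4 σ ⟨j, hj⟩ hje ((hσ' _).2 hje))
      have h3 : ((σ ⟨j, hj⟩ : ↥V) : ℕ) = j := congrArg Subtype.val this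
      exact Subtype.ext h3
  · rw [hsup]
    constructor
    · rintro ⟨hjo, hc⟩
      replace hc : σ ⟨j, hj⟩ = ⟨j, hj⟩ := hc
      have hA := gm_A σ ⟨j, hj⟩ hc.le
      rw [hc] at hA
      exact ⟨hsnd1 j hj, hjo, by rw [s2 σ j hj ⟨hjo, hA⟩]⟩
    · rintro ⟨-, hjo, hc⟩
      refine ⟨hjo, ?_⟩
      by_cases h : Odd j ∧ gm σ ⟨j, hj⟩ = ⟨j, hj⟩
      · have hB := gm_B σ ⟨j, hj⟩
        rw [h.2] at hB
        exact le_antisymm hB ((hσ' _).1 hjo)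
      · rw [s1 σ j hj h] at hc
        simp only at hc
        exact absurd (hc ▸ (gm σ ⟨j, hj⟩).2) hMV


end
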